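/- Let g ≥ 1 and let χ : ℤ^{2g} → ℂ be an additive group homomorphism. If α₁, β₁, …, α_g, β_g and α₁′, β₁′, …, α_g′, β_g′ are two symplectic bases of ℤ^{2g}, then Σᵢ₌₁^g Im(conj(χ(αᵢ)) · χ(βᵢ)) = Σᵢ₌₁^g Im(conj(χ(αᵢ′)) · χ(βᵢ′)); in other words the volume vol(χ) = Σᵢ Im(conj(χ(αᵢ)) · χ(βᵢ)) does not depend on the choice of symplectic basis. -/

import Mathlib

open scoped BigOperators

/-- The standard symplectic (intersection) form on `ℤ^{2g}`. -/
def symplecticForm (g : ℕ) (x y : Fin (2 * g) → ℤ) : ℤ :=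
  ∑ i : Fin g,
    (x ⟨2 * i.1, by have := i.isLt; omega⟩ * y ⟨2 * i.1 + 1, by have := i.isLt; omega⟩
      - x ⟨2 * i.1 + 1, by have := i.isLt; omega⟩ * y ⟨2 * i.1, by have := i.isLt; omega⟩)

/-- `α₁, β₁, …, α_g, β_g` is a symplectic basis of `ℤ^{2g}`. -/
def IsSymplecticBasis (g : ℕ) (α β : Fin g → (Fin (2 * g) → ℤ)) : Prop :=
  ∀ i j : Fin g,
    symplecticForm g (α i) (α j) = 0 ∧ symplecticForm g (β i) (β j) = 0 ∧
      symplecticForm g (α i) (β j) = (if i = j then 1 else 0)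

/-!
For a bilinear form `ω` on a free module of finite rank, let `(b, c)` be a pair of families, each
as long as the rank, with `ω (bᵢ, cⱼ) = δᵢⱼ`. Then `x = ∑ᵢ ω (x, cᵢ) bᵢ = ∑ᵢ ω (bᵢ, x) cᵢ`, so for
every bilinear `E` the contraction `∑ᵢ E (bᵢ, cᵢ)` depends on `ω` alone: given a second pair
`(b', c')`, expand `bᵢ` in the `bⱼ'`, exchange the sums, and recognise the expansion of `cⱼ'` in
the `cᵢ`.

A symplectic basis gives the pair `b = (α, β)`, `c = (β, -α)`, whose contraction is
`∑ᵢ (E (αᵢ, βᵢ) - E (βᵢ, αᵢ))`. The volume of `χ` is the case `E (x, y) = Re (χ x) * Im (χ y)`.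
-/

open Module
open LinearMap (BilinForm)

section DualFamilies

variable {R M N ι κ : Type*} [CommRing R] [AddCommGroup M] [Module R M]
  [AddCommGroup N] [Module R N] [DecidableEq ι] [DecidableEq κ]

theorem surjective_pi_of_apply_eq_ite [Finite ι] {e : ι → M} {ε : ι → Dual R M}
    (h : ∀ i j, ε i (e j) = if i = j then 1 else 0) :
    Function.Surjective (LinearMap.pi ε) := fun v ↦ by
  have := Fintype.ofFinite ι
  exact ⟨∑ j, v j • e j, by ext i; simp [h]⟩

/-- `b` and `c` are dual families for `ω`, i.e. `ω (bᵢ, cⱼ) = δᵢⱼ`. They are not required to span;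
this is automatic when they are as long as the finite rank of a free module. -/
def IsDualFamilies (ω : BilinForm R M) (b c : ι → M) : Prop :=
  ∀ i j, ω (b i) (c j) = if i = j then 1 else 0

variable {ω : BilinForm R M} {b c : ι → M} {b' c' : κ → M}

theorem IsDualFamilies.flip (h : IsDualFamilies ω b c) :
    IsDualFamilies (LinearMap.flip ω) c b := fun i j ↦ by
  simp only [LinearMap.flip_apply, h j i, eq_comm]

variable [Fintype ι] [Fintype κ] [Module.Free R M] [Module.Finite R M]

theorem dualBases_of_card_eq_finrank {e : ι → M} {ε : ι → Dual R M}
    (h : ∀ i j, ε i (e j) = if i = j then 1 else 0) (hcard : Fintype.card ι = finrank R M) :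
    DualBases e ε where
  eval_same i := by simp [h]
  eval_of_ne i j hij := by simp [h, hij]
  total hm := by
    rcases subsingleton_or_nontrivial R with _ | _
    · have := Module.subsingleton R M
      exact Subsingleton.elim _ _
    · have hle : finrank R M ≤ finrank R (ι → R) := by rw [finrank_fintype_fun_eq_card, hcard]
      exact (OrzechProperty.bijective_of_surjective_of_finrank_le _
        (surjective_pi_of_apply_eq_ite h) hle).injective (funext hm)

theorem IsDualFamilies.sum_apply_right_smul (h : IsDualFamilies ω b c)
    (hcard : Fintype.card ι = finrank R M) (x : M) : ∑ i, ω (b i) x • c i = x := by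
  have hbases : DualBases c (fun i ↦ ω (b i)) := dualBases_of_card_eq_finrank h hcard
  simpa using hbases.basis.sum_repr x

theorem IsDualFamilies.sum_apply_left_smul (h : IsDualFamilies ω b c)
    (hcard : Fintype.card ι = finrank R M) (x : M) : ∑ i, ω x (c i) • b i = x :=
  h.flip.sum_apply_right_smul hcard x

theorem IsDualFamilies.sum_apply_apply_eq (h : IsDualFamilies ω b c) (h' : IsDualFamilies ω b' c')
    (hι : Fintype.card ι = finrank R M) (hκ : Fintype.card κ = finrank R M)
    (E : M →ₗ[R] M →ₗ[R] N) : ∑ i, E (b i) (c i) = ∑ j, E (b' j) (c' j) :=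
  calc ∑ i, E (b i) (c i)
    _ = ∑ i, E (∑ j, ω (b i) (c' j) • b' j) (c i) := by simp only [h'.sum_apply_left_smul hκ]
    _ = ∑ j, E (b' j) (∑ i, ω (b i) (c' j) • c i) := by
      simp only [map_sum, map_smul, LinearMap.sum_apply, LinearMap.smul_apply]
      exact Finset.sum_comm
    _ = ∑ j, E (b' j) (c' j) := by simp only [h.sum_apply_right_smul hι]

end DualFamilies

section SymplecticFamilies

variable {R M N ι κ : Type*} [CommRing R] [AddCommGroup M] [Module R M]
  [AddCommGroup N] [Module R N] [DecidableEq ι] [DecidableEq κ]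

/-- The symplectic relations `ω (αᵢ, αⱼ) = ω (βᵢ, βⱼ) = 0` and `ω (αᵢ, βⱼ) = δᵢⱼ`. As for dual
families, spanning is not part of the definition. -/
structure IsSymplecticFamily (ω : BilinForm R M) (α β : ι → M) : Prop where
  left_left : ∀ i j, ω (α i) (α j) = 0
  right_right : ∀ i j, ω (β i) (β j) = 0
  left_right : ∀ i j, ω (α i) (β j) = if i = j then 1 else 0

variable {ω : BilinForm R M} {α β : ι → M} {α' β' : κ → M}

theorem IsSymplecticFamily.isDualFamilies (h : IsSymplecticFamily ω α β) (hω : ω.IsAlt) :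
    IsDualFamilies ω (Sum.elim α β) (Sum.elim β (-α)) := by
  have right_left (i j : ι) : -ω (β i) (α j) = if i = j then 1 else 0 := by
    rw [hω.neg_eq, h.left_right]
    simp only [eq_comm]
  rintro (i | i) (j | j) <;> simp [h.left_left, h.right_right, h.left_right, right_left]

variable [Module.Free R M] [Module.Finite R M] [Fintype ι] [Fintype κ]

theorem IsSymplecticFamily.sum_apply_sub_apply_eq (hω : ω.IsAlt)
    (h : IsSymplecticFamily ω α β) (h' : IsSymplecticFamily ω α' β')
    (hι : 2 * Fintype.card ι = finrank R M) (hκ : 2 * Fintype.card κ = finrank R M)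
    (E : M →ₗ[R] M →ₗ[R] N) :
    ∑ i, (E (α i) (β i) - E (β i) (α i)) = ∑ j, (E (α' j) (β' j) - E (β' j) (α' j)) := by
  have := (h.isDualFamilies hω).sum_apply_apply_eq (h'.isDualFamilies hω)
    (by simp [← hι, two_mul]) (by simp [← hκ, two_mul]) E
  simpa [Finset.sum_add_distrib, sub_eq_add_neg] using this

end SymplecticFamilies

/-- The bilinear map `(x, y) ↦ Re (χ x) * Im (χ y)`, whose antisymmetrization is the area form
`Im (conj (χ x) * χ y)`. -/
noncomputable def reMulIm {L : Type*} [AddCommGroup L] (χ : L →+ ℂ) : L →ₗ[ℤ] L →ₗ[ℤ] ℝ :=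
  (LinearMap.mul ℤ ℝ).compl₁₂ (Complex.reAddGroupHom.comp χ).toIntLinearMap
    (Complex.imAddGroupHom.comp χ).toIntLinearMap

theorem reMulIm_apply {L : Type*} [AddCommGroup L] (χ : L →+ ℂ) (x y : L) :
    reMulIm χ x y = (χ x).re * (χ y).im := rfl

theorem im_conj_mul_eq_reMulIm_sub {L : Type*} [AddCommGroup L] (χ : L →+ ℂ) (x y : L) :
    ((starRingEnd ℂ) (χ x) * χ y).im = reMulIm χ x y - reMulIm χ y x := by
  simp only [reMulIm_apply, Complex.mul_im, Complex.conj_re, Complex.conj_im]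
  ring

theorem volume_independent_of_symplectic_basis_general {L ι κ : Type*} [AddCommGroup L]
    [Module.Free ℤ L] [Module.Finite ℤ L] [Fintype ι] [DecidableEq ι] [Fintype κ] [DecidableEq κ]
    {ω : BilinForm ℤ L} (hω : ω.IsAlt) (χ : L →+ ℂ) {α β : ι → L} {α' β' : κ → L}
    (h : IsSymplecticFamily ω α β) (h' : IsSymplecticFamily ω α' β')
    (hι : 2 * Fintype.card ι = finrank ℤ L) (hκ : 2 * Fintype.card κ = finrank ℤ L) :
    ∑ i, ((starRingEnd ℂ) (χ (α i)) * χ (β i)).im =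
      ∑ j, ((starRingEnd ℂ) (χ (α' j)) * χ (β' j)).im := by
  simp only [im_conj_mul_eq_reMulIm_sub]
  exact h.sum_apply_sub_apply_eq hω h' hι hκ (reMulIm χ)

/-- `symplecticForm g` as a bundled bilinear form. -/
def symplecticBilinForm (g : ℕ) : BilinForm ℤ (Fin (2 * g) → ℤ) :=
  ∑ i : Fin g,
    (BilinForm.linMulLin (LinearMap.proj ⟨2 * i, by lia⟩) (LinearMap.proj ⟨2 * i + 1, by lia⟩)
      - BilinForm.linMulLin (LinearMap.proj ⟨2 * i + 1, by lia⟩) (LinearMap.proj ⟨2 * i, by lia⟩))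

theorem symplecticBilinForm_apply (g : ℕ) (x y : Fin (2 * g) → ℤ) :
    symplecticBilinForm g x y = symplecticForm g x y := by
  simp [symplecticBilinForm, symplecticForm]

theorem isAlt_symplecticBilinForm (g : ℕ) : (symplecticBilinForm g).IsAlt := fun x ↦ by
  simp [symplecticBilinForm_apply, symplecticForm, mul_comm]

theorem IsSymplecticBasis.isSymplecticFamily {g : ℕ} {α β : Fin g → (Fin (2 * g) → ℤ)}
    (h : IsSymplecticBasis g α β) : IsSymplecticFamily (symplecticBilinForm g) α β where
  left_left i j := (symplecticBilinForm_apply g _ _).trans (h i j).1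
  right_right i j := (symplecticBilinForm_apply g _ _).trans (h i j).2.1
  left_right i j := (symplecticBilinForm_apply g _ _).trans (h i j).2.2

/-- The volume `vol(χ) = Σᵢ Im(conj(χ(αᵢ)) · χ(βᵢ))` of a period character
`χ : ℤ^{2g} → ℂ` does not depend on the choice of symplectic basis. -/
theorem volume_independent_of_symplectic_basis (g : ℕ) (hg : 1 ≤ g)
    (χ : (Fin (2 * g) → ℤ) →+ ℂ)
    (α β α' β' : Fin g → (Fin (2 * g) → ℤ))
    (hαβ : IsSymplecticBasis g α β) (hαβ' : IsSymplecticBasis g α' β') :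
    ∑ i : Fin g, ((starRingEnd ℂ) (χ (α i)) * χ (β i)).im =
      ∑ i : Fin g, ((starRingEnd ℂ) (χ (α' i)) * χ (β' i)).im :=
  volume_independent_of_symplectic_basis_general (isAlt_symplecticBilinForm g) χ
    hαβ.isSymplecticFamily hαβ'.isSymplecticFamily (by simp) (by simp)
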